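/- For any ε > 0 there exists N = N(ε) > 0 such that for any probability measure μ on Σ_Ω there exist σ_1,…,σ_N ∈ Σ_Ω and a probability vector w = (w_1,…,w_N) such that Cut□(μ, Σ_{i=1}^N w_i δ_{σ_i}) < ε. -/

import Mathlib

open MeasureTheory Set Filter Topology

noncomputable section

namespace Paper

/-- Lebesgue measure restricted to `[0,1)`, representing the unit interval. -/
def lam01 : Measure ℝ := volume.restrict (Set.Ico (0:ℝ) 1)

instance : IsProbabilityMeasure lam01 :=
  ⟨by simp [lam01, Real.volume_Ico]⟩

variable (Ω : Type) [Fintype Ω]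

/-- The simplex `P(Ω) ⊆ ℝ^Ω` of probability vectors. -/
def simplex : Set (Ω → ℝ) := {p | (∀ ω, 0 ≤ p ω) ∧ ∑ ω, p ω = 1}

/-- `Σ_Ω = L¹([0,1), P(Ω))`: elements of `L¹([0,1), ℝ^Ω)` taking values in the simplex a.e. -/
def SigmaSp := {f : MeasureTheory.Lp (Ω → ℝ) 1 lam01 // ∀ᵐ x ∂lam01, f x ∈ simplex Ω}

instance : TopologicalSpace (SigmaSp Ω) := by unfold SigmaSp; infer_instance
instance : MeasurableSpace (SigmaSp Ω) := borel _
instance : BorelSpace (SigmaSp Ω) := ⟨rfl⟩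

/-- Evaluation of (a representative of) an element of `Σ_Ω`. -/
def ev (f : SigmaSp Ω) (x : ℝ) : Ω → ℝ := f.1 x

/-- Probability measures on `Σ_Ω`. -/
abbrev PM := ProbabilityMeasure (SigmaSp Ω)

/-- `γ` is a coupling of `μ` and `ν`. -/
def IsCoupling (μ ν : PM Ω) (γ : Measure (SigmaSp Ω × SigmaSp Ω)) : Prop :=
  γ.map Prod.fst = (μ : Measure (SigmaSp Ω)) ∧ γ.map Prod.snd = (ν : Measure (SigmaSp Ω))

/-- Total variation norm of a vector in `ℝ^Ω`. -/
def tv (v : Ω → ℝ) : ℝ := (∑ ω, |v ω|) / 2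

/-- The inner `sup` of the cut metric, for a given coupling `γ` and rearrangement `s`. -/
def cutPair (γ : Measure (SigmaSp Ω × SigmaSp Ω)) (s : ℝ → ℝ) : ℝ :=
  ⨆ (B : Set (SigmaSp Ω × SigmaSp Ω)) (_ : MeasurableSet B) (U : Set ℝ) (_ : MeasurableSet U),
    tv Ω (fun ω => ∫ p in B, (∫ x in U, (ev Ω p.1 x ω - ev Ω p.2 (s x) ω) ∂lam01) ∂γ)

/-- The strong cut metric `Cut□`. -/
def CutD (μ ν : PM Ω) : ℝ := ⨅ (γ : {γ // IsCoupling Ω μ ν γ}), cutPair Ω γ.1 id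

/-- `S_{[0,1)}`: Lebesgue-measure-preserving measurable self-maps of `[0,1)`. -/
def IsMPS (s : ℝ → ℝ) : Prop :=
  MeasurePreserving s lam01 lam01 ∧ MapsTo s (Ico (0:ℝ) 1) (Ico (0:ℝ) 1)

/-- The weak cut metric `cut□`. -/
def cutd (μ ν : PM Ω) : ℝ :=
  ⨅ (γ : {γ // IsCoupling Ω μ ν γ}) (s : {s // IsMPS s}), cutPair Ω γ.1 s.1


open scoped Classical

/-- `σ[ω|U] = ∫_U σ_x(ω) dx`. -/
def avgOn (f : SigmaSp Ω) (U : Set ℝ) (ω : Ω) : ℝ := ∫ x in U, ev Ω f x ω ∂lam01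

/-- `⟨Σ[·|U]⟩_{μ[·|T]} = (1/μ(T)) ∫_T σ[·|U] dμ(σ)`. -/
def condAvg (μ : PM Ω) (T : Set (SigmaSp Ω)) (U : Set ℝ) (ω : Ω) : ℝ :=
  (∫ f in T, avgOn Ω f U ω ∂(μ : Measure (SigmaSp Ω))) /
    (((μ : Measure (SigmaSp Ω)) T).toReal)

/-- A finite measurable partition of `[0,1)`. -/
def IsPartitionI {K : ℕ} (V : Fin K → Set ℝ) : Prop :=
  (∀ i, MeasurableSet (V i)) ∧ Pairwise (Function.onFun Disjoint V) ∧
    (⋃ i, V i) = Ico (0:ℝ) 1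

/-- A finite measurable partition of `Σ_Ω`. -/
def IsPartitionS {L : ℕ} (S : Fin L → Set (SigmaSp Ω)) : Prop :=
  (∀ j, MeasurableSet (S j)) ∧ Pairwise (Function.onFun Disjoint S) ∧
    (⋃ j, S j) = univ

/-- `μ` is `ε`-regular with respect to the pair of partitions `(V, S)`: conditions
**REG1**–**REG4** of the paper. -/
def IsRegular (ε : ℝ) (μ : PM Ω) {K L : ℕ}
    (V : Fin K → Set ℝ) (S : Fin L → Set (SigmaSp Ω)) : Prop :=
  ∃ R : Set (Fin K × Fin L),
    -- REG1
    (∀ p ∈ R, 0 < lam01 (V p.1) ∧ 0 < (μ : Measure (SigmaSp Ω)) (S p.2)) ∧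
    -- REG2
    (1 - ε < ∑ p : Fin K × Fin L,
        if p ∈ R then (lam01 (V p.1)).toReal * ((μ : Measure (SigmaSp Ω)) (S p.2)).toReal
        else 0) ∧
    -- REG3
    (∀ p ∈ R, ∀ f ∈ S p.2, ∀ g ∈ S p.2,
      tv Ω (fun ω => avgOn Ω f (V p.1) ω - avgOn Ω g (V p.1) ω) < ε) ∧
    -- REG4
    (∀ p ∈ R, ∀ U : Set ℝ, U ⊆ V p.1 → MeasurableSet U →
      ε * (lam01 (V p.1)).toReal ≤ (lam01 U).toReal →
      ∀ T : Set (SigmaSp Ω), T ⊆ S p.2 → MeasurableSet T →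
      ε * ((μ : Measure (SigmaSp Ω)) (S p.2)).toReal ≤ ((μ : Measure (SigmaSp Ω)) T).toReal →
      tv Ω (fun ω => condAvg Ω μ T U ω - condAvg Ω μ (S p.2) (V p.1) ω) < ε)

/-- `(V, S)` refines `(V₀, S₀)`. -/
def Refines {K L K₀ L₀ : ℕ} (V : Fin K → Set ℝ) (S : Fin L → Set (SigmaSp Ω))
    (V₀ : Fin K₀ → Set ℝ) (S₀ : Fin L₀ → Set (SigmaSp Ω)) : Prop :=
  (∀ i, ∃ i₀, V i ⊆ V₀ i₀) ∧ (∀ j, ∃ j₀, S j ⊆ S₀ j₀)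

/-!
Embed `Σ_Ω` in `H = L²([0,1), ℝ^Ω)` and regard `μ` as the law of an `H`-valued random variable `F`
of norm at most `1`. For a partition `j` of `Σ_Ω` into cells, call `∫ ‖E[F | j]‖² dμ` its energy.
If `‖∫_T (F - E[F | j]) dμ‖ > δ` for some measurable `T`, then by Pythagoras and Cauchy–Schwarz
splitting every cell along `T` raises the energy by at least `δ²`. Since energies lie in `[0, 1]`,
after fewer than `1 / δ² + 1` splittings no such `T` is left. The number of cells is then bounded
in terms of `δ` only.

The mean of `F` over a cell again lies in `Σ_Ω`, which is closed and convex in `H`. Moving every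
`σ` to the mean of its cell thus turns `μ` into a finite mixture of Dirac measures. Along the
coupling given by this map, the integral over `B × U` of each coordinate `ω` is the inner product of
`∫_T (F - E[F | j]) dμ`, for a suitable `T`, with the indicator of `U` in direction `ω`, so it is at
most `δ` in absolute value.
-/

section WeakRegularity

variable {X H : Type*} {m m₁ m₂ mX : MeasurableSpace X} {μ : Measure X}
  [NormedAddCommGroup H] [InnerProductSpace ℝ H] {F G : X → H}

theorem norm_setIntegral_sq_le [IsProbabilityMeasure μ] (hF : MemLp F 2 μ) (T : Set X) :
    ‖∫ x in T, F x ∂μ‖ ^ 2 ≤ ∫ x, ‖F x‖ ^ 2 ∂μ := by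
  have hF₁ : Integrable (fun x => ‖F x‖) μ := (hF.integrable one_le_two).norm
  calc ‖∫ x in T, F x ∂μ‖ ^ 2
      ≤ (∫ x, ‖F x‖ ∂μ) ^ 2 := by
        gcongr
        exact (norm_integral_le_integral_norm _).trans
          (setIntegral_le_integral hF₁ (.of_forall fun _ => norm_nonneg _))
    _ ≤ ∫ x, ‖F x‖ ^ 2 ∂μ :=
        even_two.convexOn_pow.map_integral_le (by fun_prop) isClosed_univ (by simp) hF₁
          (hF.integrable_norm_pow two_ne_zero)

theorem integrable_inner_of_memLp_two (hF : MemLp F 2 μ) (hG : MemLp G 2 μ) :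
    Integrable (fun x => inner ℝ (F x) (G x)) μ :=
  (hF.norm.integrable_mul hG.norm).mono' (hF.1.inner hG.1)
    (.of_forall fun x => norm_inner_le_norm (F x) (G x))

variable [CompleteSpace H]

theorem integral_inner_condExp_left [IsFiniteMeasure μ] (hm : m ≤ mX) (hF : MemLp F 2 μ)
    (hG : MemLp G 2 μ) (hGm : AEStronglyMeasurable[m] G μ) :
    ∫ x, inner ℝ (μ[F|m] x) (G x) ∂μ = ∫ x, inner ℝ (F x) (G x) ∂μ := by
  rw [← integral_condExp hm (f := fun x => inner ℝ (F x) (G x))]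
  exact integral_congr_ae (condExp_bilin_of_aestronglyMeasurable_right (innerSL ℝ) hGm
    (integrable_inner_of_memLp_two hF hG) (hF.integrable one_le_two)).symm

theorem integral_norm_sub_condExp_sq [IsFiniteMeasure μ] (hm : m ≤ mX) (hF : MemLp F 2 μ) :
    ∫ x, ‖F x - μ[F|m] x‖ ^ 2 ∂μ = ∫ x, ‖F x‖ ^ 2 ∂μ - ∫ x, ‖μ[F|m] x‖ ^ 2 ∂μ := by
  have hE : MemLp (μ[F|m]) 2 μ := hF.condExp one_le_two
  have hFE : Integrable (fun x => 2 * inner ℝ (F x) (μ[F|m] x)) μ :=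
    (integrable_inner_of_memLp_two hF hE).const_mul 2
  have orthogonality : ∫ x, inner ℝ (F x) (μ[F|m] x) ∂μ = ∫ x, ‖μ[F|m] x‖ ^ 2 ∂μ := by
    simp only [← integral_inner_condExp_left hm hF hE
      stronglyMeasurable_condExp.aestronglyMeasurable, real_inner_self_eq_norm_sq]
  simp only [norm_sub_sq_real]
  have hF₂ : Integrable (fun x => ‖F x‖ ^ 2) μ := hF.integrable_norm_pow two_ne_zero
  have hF₂E : Integrable (fun x => ‖F x‖ ^ 2 - 2 * inner ℝ (F x) (μ[F|m] x)) μ := hF₂.sub hFE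
  rw [integral_add hF₂E (hE.integrable_norm_pow two_ne_zero), integral_sub hF₂ hFE,
    integral_const_mul, orthogonality]
  ring

theorem integral_norm_condExp_sq_add_le [IsProbabilityMeasure μ] (h₁₂ : m₁ ≤ m₂) (hm₂ : m₂ ≤ mX)
    (hF : MemLp F 2 μ) {T : Set X} (hT : MeasurableSet[m₂] T) :
    ∫ x, ‖μ[F|m₁] x‖ ^ 2 ∂μ + ‖∫ x in T, (F x - μ[F|m₁] x) ∂μ‖ ^ 2 ≤
      ∫ x, ‖μ[F|m₂] x‖ ^ 2 ∂μ := by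
  have hF₁ : Integrable F μ := hF.integrable one_le_two
  have hE : MemLp (μ[F|m₂]) 2 μ := hF.condExp one_le_two
  have tower : μ[μ[F|m₂]|m₁] =ᵐ[μ] μ[F|m₁] := condExp_condExp_of_le h₁₂ hm₂
  have deviation : ∫ x in T, (F x - μ[F|m₁] x) ∂μ =
      ∫ x in T, (μ[F|m₂] x - μ[μ[F|m₂]|m₁] x) ∂μ := by
    rw [integral_sub hF₁.integrableOn integrable_condExp.integrableOn,
      integral_sub integrable_condExp.integrableOn integrable_condExp.integrableOn,
      setIntegral_condExp hm₂ hF₁ hT, integral_congr_ae (ae_restrict_of_ae tower)]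
  have pythagoras := integral_norm_sub_condExp_sq (h₁₂.trans hm₂) hE
  have tower_energy : ∫ x, ‖μ[μ[F|m₂]|m₁] x‖ ^ 2 ∂μ = ∫ x, ‖μ[F|m₁] x‖ ^ 2 ∂μ :=
    integral_congr_ae (tower.mono fun x hx => by simp only [hx])
  have := norm_setIntegral_sq_le (hE.sub (hE.condExp (m := m₁) one_le_two)) T
  rw [deviation]
  simp only [Pi.sub_apply] at this
  linarith

/-- The labelling of the partition into fibres of `j`, refined by splitting each fibre along `T`:
membership in `T` is recorded in a new lowest binary digit. -/
def splitAlong (j : X → ℕ) (T : Set X) (x : X) : ℕ := 2 * j x + T.indicator 1 x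

theorem splitAlong_div_two (j : X → ℕ) (T : Set X) (x : X) : splitAlong j T x / 2 = j x := by
  by_cases hx : x ∈ T <;> simp only [splitAlong, hx, indicator_of_mem, not_false_eq_true,
    indicator_of_notMem, Pi.one_apply] <;> omega

theorem odd_splitAlong_iff {j : X → ℕ} {T : Set X} {x : X} : Odd (splitAlong j T x) ↔ x ∈ T := by
  by_cases hx : x ∈ T <;> simp [splitAlong, hx]

theorem measurable_splitAlong {j : X → ℕ} {T : Set X} (hj : Measurable j) (hT : MeasurableSet T) :
    Measurable (splitAlong j T) :=
  (hj.const_mul 2).add (measurable_one.indicator hT)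

theorem comap_le_comap_splitAlong (j : X → ℕ) (T : Set X) :
    MeasurableSpace.comap j ⊤ ≤ MeasurableSpace.comap (splitAlong j T) ⊤ := by
  have : j = (· / 2) ∘ splitAlong j T := funext fun x => (splitAlong_div_two j T x).symm
  conv_lhs => rw [this, ← MeasurableSpace.comap_comp]
  exact MeasurableSpace.comap_mono le_top

theorem measurableSet_comap_splitAlong (j : X → ℕ) (T : Set X) :
    MeasurableSet[MeasurableSpace.comap (splitAlong j T) ⊤] T :=
  ⟨{k | Odd k}, trivial, ext fun _ => odd_splitAlong_iff⟩

theorem exists_fin_measurable_norm_setIntegral_sub_condExp_le [IsProbabilityMeasure μ]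
    (hF : MemLp F 2 μ) {δ : ℝ} (hδ : 0 ≤ δ) {n : ℕ} (hn : ∫ x, ‖F x‖ ^ 2 ∂μ < n * δ ^ 2) :
    ∃ j : X → Fin (2 ^ n), Measurable j ∧ ∀ T, MeasurableSet T →
      ‖∫ x in T, (F x - μ[F|MeasurableSpace.comap j ⊤] x) ∂μ‖ ≤ δ := by
  suffices ∃ j : X → ℕ, Measurable j ∧ (∀ x, j x < 2 ^ n) ∧ ∀ T, MeasurableSet T →
      ‖∫ x in T, (F x - μ[F|MeasurableSpace.comap j ⊤] x) ∂μ‖ ≤ δ by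
    obtain ⟨j, hj, hjn, hreg⟩ := this
    have comap_val : MeasurableSpace.comap (Fin.val : Fin (2 ^ n) → ℕ) ⊤ = ⊤ :=
      top_unique fun s _ => ⟨Fin.val '' s, trivial, preimage_image_eq s Fin.val_injective⟩
    have comap_fin : MeasurableSpace.comap (fun x => (⟨j x, hjn x⟩ : Fin (2 ^ n))) ⊤ =
        MeasurableSpace.comap j ⊤ := by
      rw [← comap_val, MeasurableSpace.comap_comp]
      rfl
    exact ⟨_, measurable_iff_comap_le.2 (comap_fin.trans_le hj.comap_le), by rwa [comap_fin]⟩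
  by_contra! irregular
  have energy_increment (k : ℕ) (hk : k ≤ n) : ∃ j : X → ℕ, Measurable j ∧ (∀ x, j x < 2 ^ k) ∧
      k * δ ^ 2 ≤ ∫ x, ‖μ[F|MeasurableSpace.comap j ⊤] x‖ ^ 2 ∂μ := by
    induction k with
    | zero => exact ⟨0, measurable_zero, by simp, by simpa using by positivity⟩
    | succ k ih =>
      obtain ⟨j, hj, hjk, henergy⟩ := ih (by omega)
      have hkn : 2 ^ k ≤ 2 ^ n := Nat.pow_le_pow_right two_pos (by omega)
      obtain ⟨T, hT, hδT⟩ := irregular j hj fun x => (hjk x).trans_le hkn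
      have hj' := measurable_splitAlong hj hT
      refine ⟨splitAlong j T, hj', fun x => ?_, ?_⟩
      · have := splitAlong_div_two j T x
        have := hjk x
        omega
      · have := integral_norm_condExp_sq_add_le (comap_le_comap_splitAlong j T) hj'.comap_le hF
          (measurableSet_comap_splitAlong j T)
        have : δ ^ 2 ≤ ‖∫ x in T, (F x - μ[F|MeasurableSpace.comap j ⊤] x) ∂μ‖ ^ 2 := by gcongr
        push_cast
        linarith
  obtain ⟨j, hj, -, henergy⟩ := energy_increment n le_rfl
  have energy_le := integral_norm_sub_condExp_sq (m := MeasurableSpace.comap j ⊤) hj.comap_le hF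
  have : 0 ≤ ∫ x, ‖F x - μ[F|MeasurableSpace.comap j ⊤] x‖ ^ 2 ∂μ := by positivity
  linarith

theorem comp_ae_eq_condExp_comap {ι : Type*} [Countable ι] {mι : MeasurableSpace ι}
    [MeasurableSingletonClass ι] [IsFiniteMeasure μ] (hF : Integrable F μ) {j : X → ι}
    (hj : Measurable j) {g : ι → H}
    (hg : ∀ i, μ.real (j ⁻¹' {i}) • g i = ∫ x in j ⁻¹' {i}, F x ∂μ) :
    g ∘ j =ᵐ[μ] μ[F|mι.comap j] := by
  obtain ⟨h, -, hcomp⟩ : ∃ h : ι → H, StronglyMeasurable h ∧ μ[F|mι.comap j] = h ∘ j :=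
    stronglyMeasurable_condExp.exists_eq_measurable_comp
  have hfibre (i : ι) : μ.real (j ⁻¹' {i}) • g i = μ.real (j ⁻¹' {i}) • h i := by
    have hi : MeasurableSet (j ⁻¹' {i}) := hj (measurableSet_singleton i)
    calc μ.real (j ⁻¹' {i}) • g i
        = ∫ x in j ⁻¹' {i}, μ[F|mι.comap j] x ∂μ := by
          rw [hg, setIntegral_condExp hj.comap_le hF ⟨_, measurableSet_singleton i, rfl⟩]
      _ = ∫ _ in j ⁻¹' {i}, h i ∂μ :=
          setIntegral_congr_fun hi fun x hx => by
            rw [hcomp, Function.comp_apply, eq_of_mem_singleton hx]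
      _ = μ.real (j ⁻¹' {i}) • h i := setIntegral_const _
  have hpos : ∀ᵐ x ∂μ, μ (j ⁻¹' {j x}) ≠ 0 := by
    have : ∀ᵐ i ∂μ.map j, μ.map j {i} ≠ 0 := ae_iff_of_countable.2 fun _ => id
    filter_upwards [ae_of_ae_map hj.aemeasurable this] with x hx
    rwa [← Measure.map_apply hj (measurableSet_singleton _)]
  filter_upwards [hpos] with x hx
  rw [hcomp]
  exact smul_right_injective H (measureReal_ne_zero_iff (by finiteness) |>.2 hx) (hfibre (j x))

end WeakRegularity

theorem map_comp_eq_sum_smul_dirac {α ι β : Type*} [Fintype ι] [MeasurableSpace α]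
    [MeasurableSpace ι] [MeasurableSingletonClass ι] [MeasurableSpace β] (μ : Measure α)
    [IsFiniteMeasure μ] {j : α → ι} (hj : Measurable j) (σ : ι → β) :
    μ.map (σ ∘ j) = ∑ i, ENNReal.ofReal (μ.real (j ⁻¹' {i})) • Measure.dirac (σ i) := by
  have hσ : Measurable σ := .of_discrete
  rw [← Measure.map_map hσ hj, Measure.map_eq_sum μ j hj, Measure.map_sum hσ.aemeasurable,
    Measure.sum_fintype]
  simp [Measure.map_smul, Measure.map_dirac' hσ, ofReal_measureReal]

section LpSpace

variable {α E : Type*} {m : MeasurableSpace α} {μ : Measure α} [NormedAddCommGroup E]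
  {p : ENNReal} {s : Set E}

theorem isClosed_setOf_ae_mem_Lp [Fact (1 ≤ p)] (hs : IsClosed s) :
    IsClosed {f : Lp E p μ | ∀ᵐ x ∂μ, f x ∈ s} := by
  refine isSeqClosed_iff_isClosed.1 fun f g hf hfg => ?_
  obtain ⟨φ, -, hφ⟩ := (tendstoInMeasure_of_tendsto_Lp hfg).exists_seq_tendsto_ae
  filter_upwards [hφ, ae_all_iff.2 hf] with x hx hfx
  exact hs.mem_of_tendsto hx (.of_forall fun k => hfx (φ k))

theorem convex_setOf_ae_mem_Lp [NormedSpace ℝ E] (hs : Convex ℝ s) :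
    Convex ℝ {f : Lp E p μ | ∀ᵐ x ∂μ, f x ∈ s} := by
  intro f hf g hg a b ha hb hab
  change ∀ᵐ x ∂μ, (a • f + b • g : Lp E p μ) x ∈ s
  filter_upwards [Lp.coeFn_add (a • f) (b • g), Lp.coeFn_smul a f, Lp.coeFn_smul b g, hf, hg]
    with x hadd hsmulf hsmulg hfx hgx
  rw [hadd, Pi.add_apply, hsmulf, hsmulg]
  exact hs hfx hgx ha hb hab

theorem norm_indicatorConstLp_le_norm [IsProbabilityMeasure μ] {U : Set α} (hU : MeasurableSet U)
    (hμU : μ U ≠ ⊤) (c : E) : ‖indicatorConstLp p hU hμU c‖ ≤ ‖c‖ :=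
  norm_indicatorConstLp_le.trans <| mul_le_of_le_one_right (norm_nonneg c) <|
    Real.rpow_le_one measureReal_nonneg measureReal_le_one (by positivity)

end LpSpace

section HilbertEmbedding

variable {Ω}

theorem norm_toLp_two_le_one {p : Ω → ℝ} (hp : p ∈ simplex Ω) : ‖WithLp.toLp 2 p‖ ≤ 1 := by
  have hle (ω : Ω) : p ω ≤ 1 := hp.2 ▸ Finset.single_le_sum (fun i _ => hp.1 i) (Finset.mem_univ ω)
  rw [EuclideanSpace.norm_eq, Real.sqrt_le_one, ← hp.2]
  refine Finset.sum_le_sum fun ω _ => ?_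
  simpa using pow_le_of_le_one (hp.1 ω) (hle ω) two_ne_zero

theorem norm_toLp_two_sub_sq_le {p q : Ω → ℝ} (hp : p ∈ simplex Ω) (hq : q ∈ simplex Ω) :
    ‖WithLp.toLp 2 p - WithLp.toLp 2 q‖ ^ 2 ≤ 2 * ‖p - q‖ := by
  calc ‖WithLp.toLp 2 p - WithLp.toLp 2 q‖ ^ 2 = ∑ ω, |p ω - q ω| * |p ω - q ω| := by
        simp [EuclideanSpace.norm_sq_eq, ← sq]
    _ ≤ ∑ ω, (p ω + q ω) * ‖p - q‖ := by
        gcongr with ω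
        · exact add_nonneg (hp.1 ω) (hq.1 ω)
        · exact abs_sub_le_iff.2 ⟨by linarith [hq.1 ω], by linarith [hp.1 ω]⟩
        · exact norm_le_pi_norm (p - q) ω
    _ = 2 * ‖p - q‖ := by
        rw [← Finset.sum_mul, Finset.sum_add_distrib, hp.2, hq.2, one_add_one_eq_two]

theorem simplex_eq_stdSimplex : simplex Ω = stdSimplex ℝ Ω := rfl

theorem ev_mem_simplex (f : SigmaSp Ω) : ∀ᵐ x ∂lam01, ev Ω f x ∈ simplex Ω := f.2

theorem memLp_ev (f : SigmaSp Ω) : MemLp (fun x => WithLp.toLp 2 (ev Ω f x)) 2 lam01 :=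
  .of_bound ((PiLp.continuous_toLp 2 _).comp_aestronglyMeasurable (Lp.aestronglyMeasurable f.1)) 1
    ((ev_mem_simplex f).mono fun _ => norm_toLp_two_le_one)

/-- The inclusion of `Σ_Ω` into the Hilbert space `L²([0,1), ℝ^Ω)`. The target is built on
`EuclideanSpace ℝ Ω`, since the sup norm that `Σ_Ω` inherits from `Ω → ℝ` is not Hilbertian. -/
def toL2 (f : SigmaSp Ω) : Lp (EuclideanSpace ℝ Ω) 2 lam01 := (memLp_ev f).toLp

theorem coeFn_toL2 (f : SigmaSp Ω) : toL2 f =ᵐ[lam01] fun x => WithLp.toLp 2 (ev Ω f x) :=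
  (memLp_ev f).coeFn_toLp

theorem norm_toL2_le_one (f : SigmaSp Ω) : ‖toL2 f‖ ≤ 1 := by
  have := Lp.norm_le_of_ae_bound (f := toL2 f) zero_le_one <| by
    filter_upwards [coeFn_toL2 f, ev_mem_simplex f] with x hx hsimplex
    exact hx ▸ norm_toLp_two_le_one hsimplex
  simpa [measureUnivNNReal] using this

theorem norm_toL2_sub_sq_le (f g : SigmaSp Ω) :
    ‖toL2 f - toL2 g‖ ^ 2 ≤ 2 * ‖f.1 - g.1‖ := by
  rw [← real_inner_self_eq_norm_sq, L2.inner_def, L1.norm_eq_integral_norm, ← integral_const_mul]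
  refine integral_mono_ae (L2.integrable_inner _ _) ((L1.integrable_coeFn _).norm.const_mul 2) ?_
  filter_upwards [Lp.coeFn_sub (toL2 f) (toL2 g), Lp.coeFn_sub f.1 g.1, coeFn_toL2 f,
    coeFn_toL2 g, ev_mem_simplex f, ev_mem_simplex g] with x hsub2 hsub1 hf hg hfs hgs
  rw [real_inner_self_eq_norm_sq, hsub2, hsub1, Pi.sub_apply, Pi.sub_apply, hf, hg]
  exact norm_toLp_two_sub_sq_le hfs hgs

theorem continuous_toL2 : Continuous (toL2 (Ω := Ω)) := by
  refine continuous_iff_continuousAt.2 fun g => tendsto_iff_norm_sub_tendsto_zero.2 ?_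
  have hval : Continuous fun f : SigmaSp Ω => f.1 := continuous_subtype_val
  have hbound : Tendsto (fun f : SigmaSp Ω => 2 * ‖f.1 - g.1‖) (𝓝 g) (𝓝 0) := by
    simpa using ((hval.sub (continuous_const (y := g.1))).norm.const_mul 2).tendsto g
  have hsq := squeeze_zero (fun _ => sq_nonneg _) (fun f => norm_toL2_sub_sq_le f g) hbound
  simpa using hsq.sqrt

theorem memLp_toL2 (μ : Measure (SigmaSp Ω)) [IsFiniteMeasure μ] : MemLp toL2 2 μ :=
  have : Fact ((2 : ENNReal) ≠ ⊤) := ⟨ENNReal.ofNat_ne_top⟩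
  .of_bound continuous_toL2.aestronglyMeasurable 1 (.of_forall norm_toL2_le_one)

theorem integral_norm_toL2_sq_le_one (μ : Measure (SigmaSp Ω)) [IsProbabilityMeasure μ] :
    ∫ f, ‖toL2 f‖ ^ 2 ∂μ ≤ 1 := by
  simpa using integral_mono ((memLp_toL2 μ).integrable_norm_pow two_ne_zero)
    (integrable_const (1 : ℝ)) fun f => pow_le_one₀ (norm_nonneg _) (norm_toL2_le_one f)

theorem range_toL2 :
    range (toL2 (Ω := Ω)) = {g | ∀ᵐ x ∂lam01, g x ∈ WithLp.ofLp ⁻¹' simplex Ω} := by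
  ext g
  constructor
  · rintro ⟨f, rfl⟩
    filter_upwards [coeFn_toL2 f, ev_mem_simplex f] with x hx hsimplex
    rwa [mem_preimage, hx]
  · intro (hg : ∀ᵐ x ∂lam01, (g x).ofLp ∈ simplex Ω)
    have hg₁ : MemLp (fun x => (g x).ofLp) 1 lam01 :=
      (PiLp.continuousLinearEquiv 2 ℝ fun _ : Ω => ℝ).toContinuousLinearMap.comp_memLp'
        ((Lp.memLp g).mono_exponent one_le_two)
    let f : SigmaSp Ω := ⟨hg₁.toLp, by
      filter_upwards [hg₁.coeFn_toLp, hg] with x hx hsimplex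
      rwa [hx]⟩
    refine ⟨f, Lp.ext ?_⟩
    filter_upwards [coeFn_toL2 f, hg₁.coeFn_toLp] with x hf hx
    rw [hf]
    exact congrArg (WithLp.toLp 2) hx

theorem exists_smul_toL2_eq_setIntegral (μ : Measure (SigmaSp Ω)) [IsProbabilityMeasure μ]
    (T : Set (SigmaSp Ω)) : ∃ σ, μ.real T • toL2 σ = ∫ f in T, toL2 f ∂μ := by
  by_cases hT : μ T = 0
  · obtain ⟨σ⟩ := nonempty_of_isProbabilityMeasure μ
    exact ⟨σ, by simp [measureReal_def, hT, Measure.restrict_eq_zero.2 hT]⟩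
  have hconvex : Convex ℝ (range (toL2 (Ω := Ω))) := by
    rw [range_toL2, simplex_eq_stdSimplex]
    exact convex_setOf_ae_mem_Lp ((convex_stdSimplex ℝ Ω).linear_preimage
      (WithLp.linearEquiv 2 ℝ (Ω → ℝ)).toLinearMap)
  have hclosed : IsClosed (range (toL2 (Ω := Ω))) := by
    rw [range_toL2, simplex_eq_stdSimplex]
    exact isClosed_setOf_ae_mem_Lp ((isClosed_stdSimplex ℝ Ω).preimage
      (PiLp.continuous_ofLp 2 _))
  obtain ⟨σ, hσ⟩ := hconvex.set_average_mem hclosed hT (measure_ne_top μ T)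
    (.of_forall mem_range_self) ((memLp_toL2 μ).integrable one_le_two).integrableOn
  refine ⟨σ, ?_⟩
  rw [hσ, setAverage_eq, smul_inv_smul₀ (measureReal_ne_zero_iff (by finiteness) |>.2 hT)]

end HilbertEmbedding

section CutDistance

variable {Ω}

theorem setIntegral_ev_eq_inner_toL2 (f : SigmaSp Ω) {U : Set ℝ} (hU : MeasurableSet U) (ω : Ω) :
    ∫ x in U, ev Ω f x ω ∂lam01 = inner ℝ
      (indicatorConstLp 2 hU (measure_ne_top lam01 U) (EuclideanSpace.single ω 1)) (toL2 f) := by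
  rw [L2.inner_indicatorConstLp_eq_setIntegral_inner]
  refine integral_congr_ae (ae_restrict_of_ae ?_)
  filter_upwards [coeFn_toL2 f] with x hx
  simp [hx, EuclideanSpace.inner_single_left]

theorem integrable_toL2_fst_sub_toL2_snd (γ : Measure (SigmaSp Ω × SigmaSp Ω))
    [IsFiniteMeasure γ] : Integrable (fun p => toL2 p.1 - toL2 p.2) γ :=
  (((memLp_toL2 _).integrable one_le_two).comp_measurable measurable_fst).sub
    (((memLp_toL2 _).integrable one_le_two).comp_measurable measurable_snd)

theorem abs_setIntegral_ev_sub_le_norm_setIntegral_toL2_sub {γ : Measure (SigmaSp Ω × SigmaSp Ω)}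
    [IsFiniteMeasure γ] (B : Set (SigmaSp Ω × SigmaSp Ω)) {U : Set ℝ} (hU : MeasurableSet U)
    (ω : Ω) :
    |∫ p in B, (∫ x in U, (ev Ω p.1 x ω - ev Ω p.2 x ω) ∂lam01) ∂γ| ≤
      ‖∫ p in B, (toL2 p.1 - toL2 p.2) ∂γ‖ := by
  let e := indicatorConstLp 2 hU (measure_ne_top lam01 U) (EuclideanSpace.single ω (1 : ℝ))
  have norm_e : ‖e‖ ≤ 1 := (norm_indicatorConstLp_le_norm hU _ _).trans_eq (by simp)
  have hint (f : SigmaSp Ω) : Integrable (fun x => ev Ω f x ω) lam01 :=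
    (Lp.memLp f.1).integrable le_rfl |>.eval ω
  have hinner (p : SigmaSp Ω × SigmaSp Ω) :
      ∫ x in U, (ev Ω p.1 x ω - ev Ω p.2 x ω) ∂lam01 = inner ℝ e (toL2 p.1 - toL2 p.2) := by
    rw [integral_sub (hint _).integrableOn (hint _).integrableOn,
      setIntegral_ev_eq_inner_toL2 _ hU, setIntegral_ev_eq_inner_toL2 _ hU, inner_sub_right]
  simp only [hinner]
  rw [integral_inner (integrable_toL2_fst_sub_toL2_snd γ).integrableOn]
  calc |inner ℝ e (∫ p in B, (toL2 p.1 - toL2 p.2) ∂γ)|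
      ≤ ‖e‖ * ‖∫ p in B, (toL2 p.1 - toL2 p.2) ∂γ‖ := abs_real_inner_le_norm _ _
    _ ≤ ‖∫ p in B, (toL2 p.1 - toL2 p.2) ∂γ‖ :=
        mul_le_of_le_one_left (norm_nonneg _) norm_e

theorem tv_nonneg (v : Ω → ℝ) : 0 ≤ tv Ω v := by unfold tv; positivity

theorem tv_le_of_forall_abs_le {v : Ω → ℝ} {δ : ℝ} (hv : ∀ ω, |v ω| ≤ δ) :
    tv Ω v ≤ Fintype.card Ω * δ / 2 := by
  unfold tv
  gcongr
  simpa using Finset.sum_le_card_nsmul Finset.univ _ δ fun ω _ => hv ω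

theorem cutPair_nonneg (γ : Measure (SigmaSp Ω × SigmaSp Ω)) (s : ℝ → ℝ) : 0 ≤ cutPair Ω γ s :=
  Real.iSup_nonneg fun _ => Real.iSup_nonneg fun _ => Real.iSup_nonneg fun _ =>
    Real.iSup_nonneg fun _ => tv_nonneg _

theorem cutPair_id_le {γ : Measure (SigmaSp Ω × SigmaSp Ω)} [IsFiniteMeasure γ] {δ : ℝ}
    (hγ : ∀ B, MeasurableSet B → ‖∫ p in B, (toL2 p.1 - toL2 p.2) ∂γ‖ ≤ δ) :
    cutPair Ω γ id ≤ Fintype.card Ω * δ / 2 := by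
  have hδ : 0 ≤ δ := (norm_nonneg _).trans (hγ ∅ .empty)
  have hbound : 0 ≤ Fintype.card Ω * δ / 2 := by positivity
  exact Real.iSup_le (fun B => Real.iSup_le (fun hB => Real.iSup_le (fun U => Real.iSup_le
    (fun hU => tv_le_of_forall_abs_le fun ω =>
      (abs_setIntegral_ev_sub_le_norm_setIntegral_toL2_sub B hU ω).trans (hγ B hB))
    hbound) hbound) hbound) hbound

theorem cutD_le_cutPair {μ ν : PM Ω} {γ : Measure (SigmaSp Ω × SigmaSp Ω)}
    (hγ : IsCoupling Ω μ ν γ) : CutD Ω μ ν ≤ cutPair Ω γ id :=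
  ciInf_le ⟨0, forall_mem_range.2 fun _ => cutPair_nonneg _ _⟩ (⟨γ, hγ⟩ : {γ // IsCoupling Ω μ ν γ})

theorem isCoupling_map_graph (μ : PM Ω) {g : SigmaSp Ω → SigmaSp Ω} (hg : Measurable g) :
    IsCoupling Ω μ (μ.map hg.aemeasurable) ((μ : Measure (SigmaSp Ω)).map fun f => (f, g f)) := by
  have hgraph : Measurable fun f => (f, g f) := measurable_id.prodMk hg
  constructor
  · rw [Measure.map_map measurable_fst hgraph]
    exact Measure.map_id
  · rw [Measure.map_map measurable_snd hgraph]
    rfl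

theorem cutD_map_le (μ : PM Ω) {g : SigmaSp Ω → SigmaSp Ω} (hg : Measurable g) {δ : ℝ}
    (hδ : ∀ T, MeasurableSet T →
      ‖∫ f in T, (toL2 f - toL2 (g f)) ∂(μ : Measure (SigmaSp Ω))‖ ≤ δ) :
    CutD Ω μ (μ.map hg.aemeasurable) ≤ Fintype.card Ω * δ / 2 := by
  have hgraph : Measurable fun f => (f, g f) := measurable_id.prodMk hg
  refine (cutD_le_cutPair (isCoupling_map_graph μ hg)).trans (cutPair_id_le fun B hB => ?_)
  rw [setIntegral_map hB (integrable_toL2_fst_sub_toL2_snd _).aestronglyMeasurable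
    hgraph.aemeasurable]
  exact hδ _ (hgraph hB)

theorem exists_fin_cutD_map_comp_le (μ : PM Ω) {δ : ℝ} (hδ : 0 ≤ δ) {n : ℕ} (hn : 1 < n * δ ^ 2) :
    ∃ (j : SigmaSp Ω → Fin (2 ^ n)) (σ : Fin (2 ^ n) → SigmaSp Ω) (_ : Measurable j)
      (hσj : Measurable (σ ∘ j)),
      CutD Ω μ (μ.map hσj.aemeasurable) ≤ Fintype.card Ω * δ / 2 := by
  have hF : MemLp toL2 2 (μ : Measure (SigmaSp Ω)) := memLp_toL2 _
  obtain ⟨j, hj, hregular⟩ := exists_fin_measurable_norm_setIntegral_sub_condExp_le hF hδ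
    ((integral_norm_toL2_sq_le_one _).trans_lt hn)
  choose σ hσ using fun i => exists_smul_toL2_eq_setIntegral (μ : Measure (SigmaSp Ω)) (j ⁻¹' {i})
  have hσj : Measurable (σ ∘ j) := Measurable.of_discrete.comp hj
  have hcondExp : toL2 ∘ σ ∘ j =ᵐ[(μ : Measure (SigmaSp Ω))]
      (μ : Measure (SigmaSp Ω))[toL2|MeasurableSpace.comap j ⊤] :=
    comp_ae_eq_condExp_comap (hF.integrable one_le_two) hj hσ
  refine ⟨j, σ, hj, hσj, cutD_map_le μ hσj fun T hT => ?_⟩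
  refine (congrArg norm (integral_congr_ae (ae_restrict_of_ae ?_))).trans_le (hregular T hT)
  exact hcondExp.mono fun f hf => congrArg (toL2 f - ·) hf

end CutDistance

/-- **Statement 11** (Corollary). For any `ε > 0` there is `N = N(ε) > 0` such that every
probability measure `μ` on `Σ_Ω` is within `Cut□`-distance `ε` of a convex combination
`∑_{i=1}^N w_i δ_{σ_i}` of `N` Dirac measures. -/
theorem approximation_by_finite_mixtures (Ω : Type) [Fintype Ω] :
    ∀ ε : ℝ, 0 < ε → ∃ N : ℕ, 0 < N ∧
      ∀ μ : PM Ω, ∃ (σ : Fin N → SigmaSp Ω) (w : Fin N → ℝ) (ν : PM Ω),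
        (∀ i, 0 ≤ w i) ∧ (∑ i, w i = 1) ∧
        (ν : Measure (SigmaSp Ω)) =
          ∑ i : Fin N, ENNReal.ofReal (w i) • Measure.dirac (σ i) ∧
        CutD Ω μ ν < ε := by
  intro ε hε
  obtain ⟨δ, hδ, hδε⟩ : ∃ δ : ℝ, 0 < δ ∧ Fintype.card Ω * δ / 2 < ε := by
    refine ⟨ε / (Fintype.card Ω + 1), by positivity, ?_⟩
    field_simp
    linarith
  obtain ⟨n, hn⟩ : ∃ n : ℕ, 1 < n * δ ^ 2 := by
    simpa only [nsmul_eq_mul] using exists_lt_nsmul (sq_pos_of_pos hδ) 1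
  refine ⟨2 ^ n, by positivity, fun μ => ?_⟩
  obtain ⟨j, σ, hj, hσj, hcut⟩ := exists_fin_cutD_map_comp_le μ hδ.le hn
  refine ⟨σ, fun i => (μ : Measure (SigmaSp Ω)).real (j ⁻¹' {i}), μ.map hσj.aemeasurable,
    fun i => measureReal_nonneg, ?_, map_comp_eq_sum_smul_dirac _ hj σ, hcut.trans_lt hδε⟩
  rw [sum_measureReal_preimage_singleton _ fun i _ => hj (measurableSet_singleton i)]
  simp

end Paper
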